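/- Let ω ∈ P⁺ be minuscule or quasi-minuscule and let f : P → ℂ be W_R-invariant, i.e. f(wλ) = f(λ) for all w ∈ W_R and λ ∈ P. Then for every λ ∈ P_c⁺: ∑_{ν∈W₀ω} ( a_{λ,ν} f(λ−ν) + b_{λ,ν}(1−τ₀⁻²) f(λ) ) = U_{λ,ω} f(λ) + ∑_{ν∈W₀ω with λ−ν∈P_c⁺} V_{λ,ν} f(λ−ν), where V_{λ,ν} := ∑_{μ ∈ W_{R,λ}(λ−ν)} τ_{w_μ}² (the sum over the orbit of λ−ν under the stabilizer W_{R,λ} := {w ∈ W_R : wλ = λ}) and U_{λ,ω} := ∑_{ν∈W₀ω with (λ−ν)₊=λ} τ_{w_{λ−ν}}² + (1−τ₀⁻²) ∑_{ν∈W₀ω with w_{λ−ν}λ=λ} c_{λ,ν}. -/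

import Mathlib

open scoped RealInnerProductSpace BigOperators Classical

noncomputable section

/-- Alternating composition `A ∘ B ∘ A ∘ ⋯` with `m` factors (starting with `A`). -/
def altComp {α : Type*} (A B : α → α) : ℕ → (α → α)
  | 0 => id
  | m + 1 => A ∘ altComp B A m

/-- The sign of a real number, as an integer (with `sgnZ 0 = 0`). -/
def sgnZ (x : ℝ) : ℤ := if 0 < x then 1 else if x < 0 then -1 else 0

/-- The function `v(x) = (1-t²)∫₀ˣ dy/(1-2t cos y+t²)`. -/
def mvfun (t x : ℝ) : ℝ :=
  (1 - t ^ 2) * ∫ y in (0:ℝ)..x, 1 / (1 - 2 * t * Real.cos y + t ^ 2)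

section AffineOps

variable {V : Type*} [NormedAddCommGroup V] [InnerProductSpace ℝ V]

/-- The coroot `α∨ = 2α/⟨α,α⟩`. -/
def coroot (α : V) : V := (2 / ⟪α, α⟫) • α

/-- The affine root `a = α∨ + r c` (encoded as the pair `(α, r)`), as an affine
function on `V`. -/
def aval (c : ℝ) (a : V × ℤ) (x : V) : ℝ := ⟪x, coroot a.1⟫ + a.2 * c

/-- The affine reflection `s_a(x) = x - a(x) α` attached to `a = α∨ + r c`. -/
def sAff (c : ℝ) (a : V × ℤ) (x : V) : V := x - aval c a x • a.1

/-- `w` maps the affine root `a` to the affine root `b`, i.e. `(wa)(x) = a(w⁻¹x) = b(x)`. -/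
def mapsRoot (c : ℝ) (w : Equiv.Perm V) (a b : V × ℤ) : Prop :=
  ∀ x : V, aval c a (w⁻¹ x) = aval c b x

/-- The linear part `w′` of an affine transformation `w`. -/
def linPart (w : Equiv.Perm V) (x : V) : V := w x - w 0

variable {R : Type*} [Field R]

/-- The difference-reflection operator `T̂_a`. -/
def hatT (c : ℝ) (τ : V × ℤ → R) (a : V × ℤ) (f : V → R) (x : V) : R :=
  if 0 < aval c a x then τ a * f (sAff c a x)
  else if aval c a x = 0 then τ a * f x
  else (τ a)⁻¹ * f (sAff c a x) + (τ a - (τ a)⁻¹) * f x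

/-- The discrete integral operator `J_a`. -/
def Jop (c : ℝ) (a : V × ℤ) (f : V → R) (x : V) : R :=
  if 0 < aval c a x then
    - ∑ k ∈ Finset.Icc (1 : ℤ) ⌊aval c a x⌋, f (x - k • a.1)
  else if aval c a x = 0 then 0
  else ∑ k ∈ Finset.Ico (0 : ℤ) (-⌊aval c a x⌋), f (x + k • a.1)

/-- The integral-reflection operator `I_a = τ_a s_a + (τ_a - τ_a⁻¹) J_a`. -/
def Iop (c : ℝ) (τ : V × ℤ → R) (a : V × ℤ) (f : V → R) (x : V) : R :=
  τ a * f (sAff c a x) + (τ a - (τ a)⁻¹) * Jop c a f x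

end AffineOps

/-- An irreducible reduced crystallographic root system spanning `V`, together with a
choice of positive roots, simple roots, and the highest short root. -/
structure RootSystemData (V : Type*) [NormedAddCommGroup V] [InnerProductSpace ℝ V] :
    Type _ where
  n : ℕ
  n_pos : 1 ≤ n
  rank_eq : Module.finrank ℝ V = n
  R0 : Finset V
  ne_zero : ∀ α ∈ R0, α ≠ (0 : V)
  span_top : Submodule.span ℝ (R0 : Set V) = ⊤
  reduced : ∀ α ∈ R0, ∀ t : ℝ, t • α ∈ R0 → t = 1 ∨ t = -1
  crystallographic : ∀ α ∈ R0, ∀ β ∈ R0, ∃ k : ℤ, ⟪β, coroot α⟫ = (k : ℝ)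
  reflect_mem : ∀ α ∈ R0, ∀ β ∈ R0, β - ⟪β, coroot α⟫ • α ∈ R0
  irreducible : ∀ S : Finset V, S ⊆ R0 →
      (∀ a ∈ S, ∀ b ∈ R0, b ∉ S → ⟪a, b⟫ = 0) → S = ∅ ∨ S = R0
  pos : Finset V
  pos_subset : pos ⊆ R0
  pos_or_neg : ∀ α ∈ R0, α ∈ pos ∨ -α ∈ pos
  pos_not_both : ∀ α ∈ pos, -α ∉ pos
  pos_add : ∀ α ∈ pos, ∀ β ∈ pos, α + β ∈ R0 → α + β ∈ pos
  simpleRoot : Fin n → V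
  simpleRoot_mem : ∀ j, simpleRoot j ∈ pos
  pos_natCombo : ∀ α ∈ pos, ∃ k : Fin n → ℕ, α = ∑ j, (k j : ℝ) • simpleRoot j
  hshort : V
  hshort_mem : hshort ∈ pos
  hshort_short : ∀ α ∈ R0, ‖hshort‖ ≤ ‖α‖
  hshort_highest : ∀ α ∈ R0, ‖α‖ = ‖hshort‖ →
      ∃ k : Fin n → ℕ, hshort - α = ∑ j, (k j : ℝ) • simpleRoot j

namespace RootSystemData

variable {V : Type*} [NormedAddCommGroup V] [InnerProductSpace ℝ V]
variable (D : RootSystemData V)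

/-- The weight lattice `P`. -/
def weightLattice : Set V :=
  {x : V | ∀ α ∈ D.R0, ∃ k : ℤ, ⟪x, coroot α⟫ = (k : ℝ)}

/-- The root lattice `Q`. -/
def rootLattice : Set V := (Submodule.span ℤ (D.R0 : Set V) : Set V)

/-- The coweight lattice `P∨`. -/
def coweightLattice : Set V :=
  {x : V | ∀ α ∈ D.R0, ∃ k : ℤ, ⟪x, α⟫ = (k : ℝ)}

/-- The dominant cone. -/
def dominant : Set V := {x : V | ∀ α ∈ D.pos, 0 ≤ ⟪x, coroot α⟫}

/-- `ω` is a minuscule (dominant) weight. -/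
def IsMinuscule (ω : V) : Prop :=
  ω ∈ D.weightLattice ∧ ω ∈ D.dominant ∧ ω ≠ 0 ∧
    ∀ α ∈ D.pos, ⟪ω, coroot α⟫ ≤ 1

/-- `ω` is the quasi-minuscule weight, i.e. the highest short root. -/
def IsQuasiMinuscule (ω : V) : Prop := ω = D.hshort

/-- The saturated set `P_ϑ` containing the (quasi-)minuscule weights. -/
def Ptheta : Set V :=
  {ν : V | ν ∈ D.weightLattice ∧ ∀ α ∈ D.R0, α ≠ ν → |⟪ν, coroot α⟫| ≤ 1}

/-- Half sum of the positive roots. -/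
def rhoHalf : V := (2⁻¹ : ℝ) • ∑ α ∈ D.pos, α

/-- Half sum of the positive coroots. -/
def rhoVee : V := (2⁻¹ : ℝ) • ∑ α ∈ D.pos, coroot α

/-- `(α, r)` encodes an affine root. -/
def IsAffRoot (a : V × ℤ) : Prop := a.1 ∈ D.R0

/-- `(α, r)` encodes a positive affine root. -/
def IsAffPos (a : V × ℤ) : Prop :=
  a.1 ∈ D.R0 ∧ (1 ≤ a.2 ∨ (a.2 = 0 ∧ a.1 ∈ D.pos))

/-- `(α, r)` encodes a negative affine root. -/
def IsAffNeg (a : V × ℤ) : Prop := D.IsAffPos (-a.1, -a.2)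

/-- The simple affine roots `a₀ = -ϑ∨ + c`, `a_j = α_j∨`. -/
def aSimple (j : Fin (D.n + 1)) : V × ℤ :=
  Fin.cons (α := fun _ => V × ℤ) (-D.hshort, (1 : ℤ))
    (fun i => (D.simpleRoot i, (0 : ℤ))) j

/-- The reflections generating the finite Weyl group `W₀`. -/
def W0Gens : Set (Equiv.Perm V) :=
  {e | ∃ α ∈ D.R0, ∀ x, e x = x - ⟪x, coroot α⟫ • α}

/-- The finite Weyl group `W₀`. -/
def W0 : Subgroup (Equiv.Perm V) := Subgroup.closure D.W0Gens

variable (c : ℝ)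

/-- The affine reflections generating the affine Weyl group `W_R`. -/
def AffGens : Set (Equiv.Perm V) :=
  {e | ∃ a : V × ℤ, D.IsAffRoot a ∧ ∀ x, e x = sAff c a x}

/-- The affine Weyl group `W_R`. -/
def WR : Subgroup (Equiv.Perm V) := Subgroup.closure (D.AffGens c)

/-- The translations `t_{cλ}`, `λ ∈ P`. -/
def TransGens : Set (Equiv.Perm V) :=
  {e | ∃ lam ∈ D.weightLattice, ∀ x : V, e x = x + c • lam}

/-- The extended affine Weyl group `W = W₀ ⋉ t(cP)`. -/
def Wext : Subgroup (Equiv.Perm V) :=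
  Subgroup.closure (D.AffGens c ∪ D.TransGens c)

/-- The set `R(w) = R⁺ ∩ w⁻¹(R⁻)`. -/
def RW (w : Equiv.Perm V) : Set (V × ℤ) :=
  {a | D.IsAffPos a ∧ ∃ b : V × ℤ, D.IsAffNeg b ∧ mapsRoot c w a b}

/-- The length `ℓ(w) = #R(w)`. -/
def len (w : Equiv.Perm V) : ℕ := (D.RW c w).ncard

/-- The closed fundamental alcove `A_c`. -/
def alcove : Set V := {x | ∀ a : V × ℤ, D.IsAffPos a → 0 ≤ aval c a x}

/-- `wmin x` is the unique shortest element of the affine Weyl group mapping `x` into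
the fundamental alcove. -/
def IsWmin (wmin : V → Equiv.Perm V) : Prop :=
  ∀ x : V, wmin x ∈ D.WR c ∧ (wmin x) x ∈ D.alcove c ∧
    ∀ w ∈ D.WR c, w x ∈ D.alcove c → D.len c (wmin x) < D.len c w ∨ w = wmin x

/-- One step in the Bruhat order: `w < w s_a` whenever `ℓ(w) < ℓ(w s_a)`. -/
def bruhatStep (w w' : Equiv.Perm V) : Prop :=
  ∃ a : V × ℤ, D.IsAffPos a ∧ ∃ e : Equiv.Perm V,
    (∀ x, e x = sAff c a x) ∧ w' = w * e ∧ D.len c w < D.len c w'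

/-- The Bruhat order on the affine Weyl group. -/
def bruhatLE (w w' : Equiv.Perm V) : Prop :=
  Relation.ReflTransGen (D.bruhatStep c) w w'

/-- The partial order on `V`: `x ≤ y` iff `x₊ = y₊` and `w_x ≤ w_y` (Bruhat). -/
def vle (wmin : V → Equiv.Perm V) (x y : V) : Prop :=
  (wmin x) x = (wmin y) y ∧ D.bruhatLE c (wmin x) (wmin y)

/-- The interval `[x, y]` for the order `vle`. -/
def vInterval (wmin : V → Equiv.Perm V) (x y : V) : Set V :=
  {z : V | D.vle c wmin x z ∧ D.vle c wmin z y}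

/-- The partial order `⪯` on the weight lattice:
`μ ⪯ λ` iff `λ - μ ∈ Q` and `Conv [μ₊, μ] ⊆ Conv [λ₊, λ]`. -/
def pleq (wmin : V → Equiv.Perm V) (μ lam : V) : Prop :=
  lam - μ ∈ D.rootLattice ∧
    convexHull ℝ (D.vInterval c wmin ((wmin μ) μ) μ)
      ⊆ convexHull ℝ (D.vInterval c wmin ((wmin lam) lam) lam)

section Ops

variable {R : Type*} [Field R]

/-- `τ` is a multiplicity function: nonvanishing on affine roots, and invariant
under the (extended affine) Weyl group action on the affine roots. -/
def IsMultiplicity (τ : V × ℤ → R) : Prop :=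
  (∀ a : V × ℤ, D.IsAffRoot a → τ a ≠ 0) ∧
    ∀ w ∈ D.Wext c, ∀ a b : V × ℤ, D.IsAffRoot a → D.IsAffRoot b →
      mapsRoot c w a b → τ a = τ b

/-- `τ_w = ∏_{a ∈ R(w)} τ_a`. -/
def tauw (τ : V × ℤ → R) (w : Equiv.Perm V) : R := ∏ᶠ a ∈ D.RW c w, τ a

/-- `τ₀`, the multiplicity of the affine simple root `a₀`. -/
def tauZero (τ : V × ℤ → R) : R := τ (-D.hshort, (1 : ℤ))

/-- The operator `I_{j₁} ∘ ⋯ ∘ I_{jℓ}` attached to a word in the simple reflections. -/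
def wordOp (τ : V × ℤ → R) (l : List (Fin (D.n + 1))) : (V → R) → V → R :=
  (l.map fun j => Iop c τ (D.aSimple j)).foldr (· ∘ ·) id

/-- `l` is a reduced word for `w`, i.e. `w = s_{j₁} ∘ ⋯ ∘ s_{jℓ}` with `ℓ = ℓ(w)`. -/
def IsReducedWord (w : Equiv.Perm V) (l : List (Fin (D.n + 1))) : Prop :=
  l.length = D.len c w ∧
    ∀ x : V, w x = ((l.map fun j => sAff c (D.aSimple j)).foldr (· ∘ ·) id) x

/-- `e∨_τ(η) = ∏_{α ∈ R₀⁺} τ_{α∨}^{⟨η,α∨⟩}`. -/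
def etau (τ : V × ℤ → R) (η : V) : R :=
  ∏ α ∈ D.pos, τ (α, (0 : ℤ)) ^ ⌊⟪η, coroot α⟫⌋

/-- `h∨_τ = τ₀² e∨_τ(ϑ)`. -/
def hvee (τ : V × ℤ → R) : R := D.tauZero τ ^ 2 * D.etau τ D.hshort

/-- `θ(μ) = #{b ∈ R(w_μ) : b(μ) = -2}`. -/
def theta (wmin : V → Equiv.Perm V) (μ : V) : ℕ :=
  {b : V × ℤ | b ∈ D.RW c (wmin μ) ∧ aval c b μ = -2}.ncard

/-- The coefficient `c_{λ,η} = θ(λ-η) e∨_τ(η) (h∨_τ)^{-sign⟨λ,η∨⟩}`. -/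
def ccoef (τ : V × ℤ → R) (wmin : V → Equiv.Perm V) (lam η : V) : R :=
  (D.theta c wmin (lam - η) : R) * D.etau τ η *
    D.hvee τ ^ (-sgnZ ⟪lam, coroot η⟫)

/-- The coefficient `a_{λ,ν} = τ_{w_{w_λ(λ-ν)}} τ_{w_{w_λ(λ-ν)} w_λ} τ_{w_λ}⁻¹`. -/
def acoef (τ : V × ℤ → R) (wmin : V → Equiv.Perm V) (lam ν : V) : R :=
  D.tauw c τ (wmin ((wmin lam) (lam - ν))) *
    D.tauw c τ (wmin ((wmin lam) (lam - ν)) * wmin lam) *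
    (D.tauw c τ (wmin lam))⁻¹

/-- The coefficient `b_{λ,ν}`. -/
def bcoef (τ : V × ℤ → R) (wmin : V → Equiv.Perm V) (lam ν : V) : R :=
  if (wmin (lam - ν)) (lam - ν) = (wmin lam) lam then
    D.tauw c τ (wmin ((wmin lam) (lam - ν))) ^ 2 *
      (if D.IsAffNeg (ν, ⌊(1 - ⟪lam, coroot ν⟫) / c⌋) then 1 else 0)
  else D.ccoef c τ wmin ((wmin lam) lam) (linPart (wmin lam) ν)

/-- The intertwining operator `(𝒥f)(λ) = τ_{w_λ}⁻¹ (I_{w_λ} f)(λ₊)`, where `Iw` assigns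
to each `w_λ` the composite of integral-reflection operators along a reduced word. -/
def Jcal (τ : V × ℤ → R) (wmin : V → Equiv.Perm V)
    (Iw : Equiv.Perm V → (V → R) → V → R) (f : V → R) (x : V) : R :=
  (D.tauw c τ (wmin x))⁻¹ * Iw (wmin x) f ((wmin x) x)

end Ops

/-- The Yang–Yang type Morse function `𝒱_μ`. -/
def morse (t : V → ℝ) (μ ξ : V) : ℝ :=
  (c / 2) * ⟪ξ, ξ⟫ - 2 * Real.pi * ⟪D.rhoVee + μ, ξ⟫ +
    ∑ α ∈ D.pos, (2 / ⟪α, α⟫) * ∫ x in (0:ℝ)..(⟪ξ, α⟫), mvfun (t α) x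

/-- The critical equation `cξ + ∑_{α>0} v_α(⟨ξ,α⟩) α∨ = 2π(ρ∨+μ)`. -/
def criticalEq (t : V → ℝ) (μ ξ : V) : Prop :=
  c • ξ + ∑ α ∈ D.pos, mvfun (t α) ⟪ξ, α⟫ • coroot α
    = (2 * Real.pi) • (D.rhoVee + μ)

/-- The Hessian bilinear form `H_{η,ζ}(ξ)`. -/
def hessForm (t : V → ℝ) (ξ η ζ : V) : ℝ :=
  c * ⟪η, ζ⟫ + ∑ α ∈ D.R0,
    (1 - t α ^ 2) * ⟪η, α⟫ * ⟪ζ, α⟫ /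
      (⟪α, α⟫ * (1 - 2 * t α * Real.cos ⟪ξ, α⟫ + t α ^ 2))

/-- `κ_± = (2/n) ∑_{α>0} (1-t_α²)/(1 ± |t_α|)²`; here `s = ±1`. -/
def kappaPM (t : V → ℝ) (s : ℝ) : ℝ :=
  (2 / (D.n : ℝ)) * ∑ α ∈ D.pos, (1 - t α ^ 2) / (1 + s * |t α|) ^ 2

end RootSystemData

/-!
For `λ ∈ P_c⁺` the shortest element `w_λ` is trivial, so `a_{λ,ν} = τ_{w_{λ-ν}}²`. The theorem rests
on a dichotomy for the element `w_{λ-ν}`. A root `a = α∨ + rc` in `R(w_{λ-ν})` satisfies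
`a(λ) ≥ 0 > a(λ-ν)`. If all these roots vanish at `λ`, then `w_{λ-ν}λ` is again in the alcove, hence
equals `λ`. Otherwise some `a(λ)` is a positive integer smaller than `⟨ν,α∨⟩`; as `ν` is conjugate
to a (quasi-)minuscule weight this forces `α = ν` and `a(λ) = 1`, so that `λ-ν = s_a λ` and
`(λ-ν)₊ = λ`. Thus exactly one of `w_{λ-ν}λ = λ` and `(λ-ν)₊ = λ` holds. In the second case
`b_{λ,ν} = 0` and `f(λ-ν) = f(λ)`. In the first case `λ-ν` and `(λ-ν)₊` are conjugate under the
stabilizer of `λ`, and collecting the terms with the same `(λ-ν)₊` produces the coefficients `V`.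
-/

section Coroot

variable {V : Type*} [NormedAddCommGroup V] [InnerProductSpace ℝ V]

theorem coroot_neg (α : V) : coroot (-α) = -coroot α := by
  simp [coroot]

theorem coroot_involutive : Function.Involutive (coroot : V → V) := by
  intro α
  rcases eq_or_ne α 0 with rfl | h
  · simp [coroot]
  · have hα : ⟪α, α⟫ ≠ 0 := inner_self_ne_zero.mpr h
    have hscalar : 2 / (2 / ⟪α, α⟫ * (2 / ⟪α, α⟫ * ⟪α, α⟫)) * (2 / ⟪α, α⟫) = 1 := by
      field_simp
    simp only [coroot, real_inner_smul_left, real_inner_smul_right, smul_smul, hscalar, one_smul]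

theorem inner_coroot_self {α : V} (h : α ≠ 0) : ⟪α, coroot α⟫ = 2 := by
  rw [coroot, real_inner_smul_right, div_mul_cancel₀ _ (inner_self_ne_zero.mpr h)]

theorem coroot_map {W : Type*} [NormedAddCommGroup W] [InnerProductSpace ℝ W] (e : V →ₗᵢ[ℝ] W)
    (α : V) : coroot (e α) = e (coroot α) := by
  simp only [coroot, e.inner_map_map, map_smul]

theorem reflection_orthogonal_singleton_eq_sub (α x : V) :
    (ℝ ∙ α)ᗮ.reflection x = x - ⟪x, coroot α⟫ • α := by
  rw [Submodule.reflection_orthogonal_apply, Submodule.reflection_singleton_apply, neg_sub, coroot,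
    real_inner_smul_right, real_inner_self_eq_norm_sq, real_inner_comm α x,
    ← Nat.cast_smul_eq_nsmul ℝ, smul_smul, RCLike.ofReal_real_eq_id, id]
  congr 2
  push_cast
  ring

theorem coroot_sub_inner_coroot_smul (α β : V) :
    coroot (β - ⟪β, coroot α⟫ • α) = coroot β - ⟪α, coroot β⟫ • coroot α := by
  rw [← reflection_orthogonal_singleton_eq_sub]
  refine (coroot_map (ℝ ∙ α)ᗮ.reflection.toLinearIsometry β).trans ?_
  rw [LinearIsometryEquiv.coe_toLinearIsometry, reflection_orthogonal_singleton_eq_sub,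
    real_inner_comm (coroot β) α]
  simp only [coroot, real_inner_smul_left, real_inner_smul_right, smul_smul]
  congr 2
  ring

theorem inner_coroot_lt_two {α ν : V} (hα : α ≠ 0) (hle : ‖ν‖ ≤ ‖α‖) (hne : α ≠ ν) :
    ⟪ν, coroot α⟫ < 2 := by
  have hdist : 0 < ‖ν - α‖ ^ 2 := pow_pos (norm_sub_pos_iff.mpr hne.symm) 2
  have hsq : ‖ν‖ ^ 2 ≤ ‖α‖ ^ 2 := pow_le_pow_left₀ (norm_nonneg ν) hle 2
  rw [norm_sub_sq_real] at hdist
  rw [coroot, real_inner_smul_right, div_mul_eq_mul_div, div_lt_iff₀ (real_inner_self_pos.mpr hα),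
    real_inner_self_eq_norm_sq]
  linarith

end Coroot

section AffineFunctions

variable {V : Type*} [NormedAddCommGroup V] [InnerProductSpace ℝ V] {c : ℝ}

theorem aval_injective (hc : c ≠ 0) : Function.Injective (aval c : V × ℤ → V → ℝ) := by
  intro a b h
  have hconst : (a.2 : ℝ) = b.2 := by
    simpa [aval, hc] using congrFun h 0
  have hcoroot : coroot a.1 = coroot b.1 := ext_inner_left ℝ fun x => by
    simpa [aval, hconst] using congrFun h x
  exact Prod.ext (coroot_involutive.injective hcoroot) (by exact_mod_cast hconst)

theorem aval_neg (c : ℝ) (a : V × ℤ) (x : V) : aval c (-a) x = -aval c a x := by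
  simp only [aval, Prod.fst_neg, Prod.snd_neg, coroot_neg, inner_neg_right]
  push_cast
  ring

theorem aval_sub (c : ℝ) (a : V × ℤ) (x y : V) :
    aval c a (x - y) = aval c a x - ⟪y, coroot a.1⟫ := by
  simp only [aval, inner_sub_left]
  ring

theorem aval_sAff (c : ℝ) (a b : V × ℤ) (x : V) :
    aval c b (sAff c a x) = aval c b x - aval c a x * ⟪a.1, coroot b.1⟫ := by
  rw [sAff, aval_sub, real_inner_smul_left]

theorem aval_sAff_self (c : ℝ) {a : V × ℤ} (h : a.1 ≠ 0) (x : V) :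
    aval c a (sAff c a x) = -aval c a x := by
  rw [aval_sAff, inner_coroot_self h]
  ring

theorem sAff_involutive (c : ℝ) {a : V × ℤ} (h : a.1 ≠ 0) : Function.Involutive (sAff c a) := by
  intro x
  rw [sAff, aval_sAff_self c h, sAff]
  module

theorem sAff_eq_self_of_aval_eq_zero {a : V × ℤ} {x : V} (h : aval c a x = 0) :
    sAff c a x = x := by
  rw [sAff, h, zero_smul, sub_zero]

theorem sAff_sub_sAff (c : ℝ) (a : V × ℤ) (x y : V) :
    sAff c a x - sAff c a y = (ℝ ∙ a.1)ᗮ.reflection (x - y) := by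
  rw [reflection_orthogonal_singleton_eq_sub]
  simp only [sAff, aval, inner_sub_left]
  module

/-- The affine root `s_a b`, which as an affine function is `b ∘ s_a`. The floor merely reads off
the Cartan integer `⟨α,β∨⟩` as an element of `ℤ`. -/
def affReflect (a b : V × ℤ) : V × ℤ :=
  (b.1 - ⟪b.1, coroot a.1⟫ • a.1, b.2 - a.2 * ⌊⟪a.1, coroot b.1⟫⌋)

end AffineFunctions

namespace RootSystemData

variable {V : Type*} [NormedAddCommGroup V] [InnerProductSpace ℝ V]

section FiniteRoots

variable (D : RootSystemData V)

theorem neg_mem_R0 {α : V} (h : α ∈ D.R0) : -α ∈ D.R0 := by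
  have hrefl := D.reflect_mem α h α h
  rw [inner_coroot_self (D.ne_zero α h)] at hrefl
  convert hrefl using 1
  module

theorem span_simpleRoot : Submodule.span ℝ (Set.range D.simpleRoot) = ⊤ := by
  have hpos : ∀ α ∈ D.pos, α ∈ Submodule.span ℝ (Set.range D.simpleRoot) := by
    intro α hα
    obtain ⟨k, hk⟩ := D.pos_natCombo α hα
    rw [hk]
    exact Submodule.sum_mem _ fun j _ =>
      Submodule.smul_mem _ _ (Submodule.subset_span (Set.mem_range_self j))
  rw [eq_top_iff, ← D.span_top, Submodule.span_le]
  intro α hα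
  rcases D.pos_or_neg α hα with h | h
  · exact hpos α h
  · exact neg_mem_iff.mp (hpos (-α) h)

theorem finiteDimensional (D : RootSystemData V) : FiniteDimensional ℝ V :=
  .of_finrank_pos (D.rank_eq ▸ D.n_pos)

theorem exists_height : ∃ g : V →ₗ[ℝ] ℝ, ∀ j, g (D.simpleRoot j) = 1 := by
  have := D.finiteDimensional
  let B := basisOfTopLeSpanOfCardEqFinrank D.simpleRoot D.span_simpleRoot.ge
    (by rw [D.rank_eq, Fintype.card_fin])
  refine ⟨B.constr ℝ fun _ => 1, fun j => ?_⟩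
  simpa [B] using B.constr_basis ℝ (fun _ => (1 : ℝ)) j

theorem exists_inner_coroot_pos : ∃ q : V, ∀ α ∈ D.pos, 0 < ⟪q, coroot α⟫ := by
  have := D.finiteDimensional
  obtain ⟨g, hg⟩ := D.exists_height
  refine ⟨(InnerProductSpace.toDual ℝ V).symm g.toContinuousLinearMap, fun α hα => ?_⟩
  have hne := D.ne_zero α (D.pos_subset hα)
  obtain ⟨k, hk⟩ := D.pos_natCombo α hα
  obtain ⟨j, hj⟩ : ∃ j, k j ≠ 0 := by
    by_contra! hzero
    exact hne (by simpa [hzero] using hk)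
  have hheight : g α = ∑ j, (k j : ℝ) := by
    rw [hk, map_sum]
    simp only [map_smul, hg, smul_eq_mul, mul_one]
  have hgα : 0 < g α := by
    rw [hheight]
    exact Finset.sum_pos' (fun i _ => Nat.cast_nonneg _)
      ⟨j, Finset.mem_univ j, by exact_mod_cast Nat.pos_of_ne_zero hj⟩
  rw [coroot, real_inner_smul_right, InnerProductSpace.toDual_symm_apply]
  exact mul_pos (div_pos two_pos (real_inner_self_pos.mpr hne)) hgα

theorem exists_linearIsometryEquiv_of_mem_W0 {u : Equiv.Perm V} (hu : u ∈ D.W0) :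
    ∃ e : V ≃ₗᵢ[ℝ] V, (∀ x, e x = u x) ∧ ∀ α, e α ∈ D.R0 ↔ α ∈ D.R0 := by
  induction hu using Subgroup.closure_induction with
  | mem s hs =>
    obtain ⟨β, hβ, hs⟩ := hs
    have hmaps : ∀ α ∈ D.R0, (ℝ ∙ β)ᗮ.reflection α ∈ D.R0 := fun α hα => by
      rw [reflection_orthogonal_singleton_eq_sub]
      exact D.reflect_mem β hβ α hα
    refine ⟨(ℝ ∙ β)ᗮ.reflection, fun x => ?_, fun α => ⟨fun hα => ?_, hmaps α⟩⟩
    · rw [hs, reflection_orthogonal_singleton_eq_sub]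
    · simpa only [Submodule.reflection_reflection] using hmaps _ hα
  | one => exact ⟨.refl ℝ V, fun _ => rfl, fun _ => Iff.rfl⟩
  | mul u v _ _ hu hv =>
    obtain ⟨e, he, heR⟩ := hu
    obtain ⟨d, hd, hdR⟩ := hv
    exact ⟨d.trans e, fun x => by simp [he, hd], fun α => (heR (d α)).trans (hdR α)⟩
  | inv u _ hu =>
    obtain ⟨e, he, heR⟩ := hu
    refine ⟨e.symm, fun x => ?_, fun α => ?_⟩
    · rw [Equiv.Perm.eq_inv_iff_eq, ← he, e.apply_symm_apply]
    · rw [← heR, e.apply_symm_apply]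

end FiniteRoots

section SmallWeights

variable (D : RootSystemData V)

/-- The nonzero weights `ν` with `⟨ν,α∨⟩ ≤ 1` for all roots `α ≠ ν`. This `W₀`-stable condition is
all that is needed of the orbit of a minuscule or quasi-minuscule weight. -/
def smallWeights : Set V :=
  {ν | ν ∈ D.weightLattice ∧ ν ≠ 0 ∧ ∀ α ∈ D.R0, α ≠ ν → ⟪ν, coroot α⟫ ≤ 1}

variable {D}

theorem IsMinuscule.mem_smallWeights {ω : V} (h : D.IsMinuscule ω) : ω ∈ D.smallWeights := by
  obtain ⟨hP, hdom, hne, hle⟩ := h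
  refine ⟨hP, hne, fun α hα _ => ?_⟩
  rcases D.pos_or_neg α hα with hpos | hneg
  · exact hle α hpos
  · have := hdom _ hneg
    rw [coroot_neg, inner_neg_right] at this
    linarith

theorem hshort_mem_smallWeights (D : RootSystemData V) : D.hshort ∈ D.smallWeights := by
  have hroot := D.pos_subset D.hshort_mem
  refine ⟨fun α hα => D.crystallographic α hα _ hroot, D.ne_zero _ hroot, fun α hα hne => ?_⟩
  have hlt := inner_coroot_lt_two (D.ne_zero α hα) (D.hshort_short α hα) hne
  obtain ⟨k, hk⟩ := D.crystallographic α hα _ hroot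
  rw [hk] at hlt ⊢
  have : k < 2 := by exact_mod_cast hlt
  exact_mod_cast (by lia : k ≤ 1)

theorem apply_mem_smallWeights {u : Equiv.Perm V} (hu : u ∈ D.W0) {ν : V}
    (hν : ν ∈ D.smallWeights) : u ν ∈ D.smallWeights := by
  obtain ⟨e, he, heR⟩ := D.exists_linearIsometryEquiv_of_mem_W0 hu
  obtain ⟨hP, hne, hle⟩ := hν
  have hsymm : ∀ α, α ∈ D.R0 → e.symm α ∈ D.R0 := fun α hα => by
    rwa [← heR, e.apply_symm_apply]
  have hinner : ∀ α, ⟪e ν, coroot α⟫ = ⟪ν, coroot (e.symm α)⟫ := fun α => by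
    rw [← e.inner_map_map ν, ← e.coe_toLinearIsometry, ← coroot_map, e.coe_toLinearIsometry,
      e.apply_symm_apply]
  rw [← he]
  refine ⟨fun α hα => ?_, e.map_eq_zero_iff.not.mpr hne, fun α hα hαν => ?_⟩
  · rw [hinner]
    exact hP _ (hsymm α hα)
  · rw [hinner]
    exact hle _ (hsymm α hα) fun h => hαν (by rw [← h, e.apply_symm_apply])

theorem mem_smallWeights_of_isMinuscule_or_isQuasiMinuscule {ω : V}
    (h : D.IsMinuscule ω ∨ D.IsQuasiMinuscule ω) : ω ∈ D.smallWeights := by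
  rcases h with hmin | rfl
  exacts [hmin.mem_smallWeights, D.hshort_mem_smallWeights]

variable {ω : V} {orb : Finset V}

theorem orbit_subset_smallWeights (hω : ω ∈ D.smallWeights)
    (horb : ∀ ν, ν ∈ orb ↔ ∃ w ∈ D.W0, w ω = ν) : ↑orb ⊆ D.smallWeights := fun ν hν => by
  obtain ⟨w, hw, rfl⟩ := (horb ν).mp hν
  exact apply_mem_smallWeights hw hω

theorem apply_mem_orbit (horb : ∀ ν, ν ∈ orb ↔ ∃ w ∈ D.W0, w ω = ν) {u : Equiv.Perm V}
    (hu : u ∈ D.W0) {ν : V} (hν : ν ∈ orb) : u ν ∈ orb := by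
  obtain ⟨w, hw, rfl⟩ := (horb ν).mp hν
  exact (horb _).mpr ⟨u * w, mul_mem hu hw, rfl⟩

end SmallWeights

section AffineRoots

variable (D : RootSystemData V) {c : ℝ}

theorem aval_affReflect (c : ℝ) {a b : V × ℤ} (ha : D.IsAffRoot a) (hb : D.IsAffRoot b) (x : V) :
    aval c (affReflect a b) x = aval c b (sAff c a x) := by
  obtain ⟨k, hk⟩ := D.crystallographic b.1 hb a.1 ha
  rw [aval_sAff]
  simp only [affReflect, aval, coroot_sub_inner_coroot_smul, inner_sub_right,
    real_inner_smul_right, hk, Int.floor_intCast]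
  push_cast
  ring

theorem isAffRoot_affReflect {a b : V × ℤ} (ha : D.IsAffRoot a) (hb : D.IsAffRoot b) :
    D.IsAffRoot (affReflect a b) :=
  D.reflect_mem _ ha _ hb

theorem affReflect_affReflect {a b : V × ℤ} (ha : D.IsAffRoot a) (hb : D.IsAffRoot b) :
    affReflect a (affReflect a b) = b := by
  refine aval_injective one_ne_zero (funext fun x => ?_)
  rw [D.aval_affReflect 1 ha (D.isAffRoot_affReflect ha hb), D.aval_affReflect 1 ha hb,
    sAff_involutive 1 (D.ne_zero _ ha)]

theorem isAffPos_or_isAffNeg {a : V × ℤ} (ha : D.IsAffRoot a) : D.IsAffPos a ∨ D.IsAffNeg a := by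
  have hneg := D.neg_mem_R0 ha
  rcases lt_trichotomy a.2 0 with h | h | h
  · exact .inr ⟨hneg, .inl (by dsimp only; lia)⟩
  · rcases D.pos_or_neg _ ha with hpos | hpos
    · exact .inl ⟨ha, .inr ⟨h, hpos⟩⟩
    · exact .inr ⟨hneg, .inr ⟨by rw [h, neg_zero], hpos⟩⟩
  · exact .inl ⟨ha, .inl h⟩

theorem aval_nonpos_of_isAffNeg {a : V × ℤ} (ha : D.IsAffNeg a) {y : V} (hy : y ∈ D.alcove c) :
    aval c a y ≤ 0 := by
  have := hy (-a) ha
  rw [aval_neg] at this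
  linarith

theorem exists_mapsRoot {w : Equiv.Perm V} (hw : w ∈ D.WR c) {a : V × ℤ} (ha : D.IsAffRoot a) :
    ∃ b, D.IsAffRoot b ∧ mapsRoot c w a b := by
  induction hw using Subgroup.closure_induction'' generalizing a with
  | mem s hs =>
    obtain ⟨b, hb, hs⟩ := hs
    refine ⟨affReflect b a, D.isAffRoot_affReflect hb ha, fun x => ?_⟩
    have hinv : s⁻¹ x = sAff c b x := by
      rw [Equiv.Perm.inv_eq_iff_eq, hs, sAff_involutive c (D.ne_zero _ hb)]
    rw [D.aval_affReflect c hb ha, hinv]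
  | inv_mem s hs =>
    obtain ⟨b, hb, hs⟩ := hs
    refine ⟨affReflect b a, D.isAffRoot_affReflect hb ha, fun x => ?_⟩
    rw [D.aval_affReflect c hb ha, inv_inv, hs]
  | one => exact ⟨a, ha, fun _ => rfl⟩
  | mul u v _ _ hu hv =>
    obtain ⟨b, hb, hab⟩ := hv ha
    obtain ⟨d, hd, hbd⟩ := hu hb
    exact ⟨d, hd, fun x => by rw [mul_inv_rev, Equiv.Perm.mul_apply, hab, hbd]⟩

theorem exists_mem_W0_sub_eq {w : Equiv.Perm V} (hw : w ∈ D.WR c) :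
    ∃ u ∈ D.W0, ∀ x y, w x - w y = u (x - y) := by
  induction hw using Subgroup.closure_induction with
  | mem s hs =>
    obtain ⟨a, ha, hs⟩ := hs
    refine ⟨(ℝ ∙ a.1)ᗮ.reflection.toEquiv, Subgroup.subset_closure ⟨a.1, ha, fun x => ?_⟩,
      fun x y => ?_⟩
    · exact reflection_orthogonal_singleton_eq_sub a.1 x
    · rw [hs, hs, sAff_sub_sAff]
      rfl
  | one => exact ⟨1, one_mem _, fun _ _ => rfl⟩
  | mul v w _ _ hv hw =>
    obtain ⟨v', hv', hv⟩ := hv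
    obtain ⟨w', hw', hw⟩ := hw
    exact ⟨v' * w', mul_mem hv' hw', fun x y => by simp only [Equiv.Perm.mul_apply, hv, hw]⟩
  | inv w _ hw =>
    obtain ⟨u, hu, hw⟩ := hw
    refine ⟨u⁻¹, inv_mem hu, fun x y => ?_⟩
    rw [Equiv.Perm.eq_inv_iff_eq, ← hw]
    simp only [Equiv.Perm.coe_inv, Equiv.apply_symm_apply]

end AffineRoots

section Length

variable (D : RootSystemData V) {c : ℝ}

/-- The open fundamental alcove; any of its points detects the sign of every affine root. -/
def openAlcove (c : ℝ) : Set V := {p | ∀ a, D.IsAffPos a → 0 < aval c a p}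

/-- The affine roots that are positive at `p` and negative at `q`. For `p` in the open alcove and
`q = w⁻¹p` this is `R(w)`, see `RW_eq_sepRoots`. -/
def sepRoots (c : ℝ) (p q : V) : Set (V × ℤ) :=
  {a | D.IsAffRoot a ∧ 0 < aval c a p ∧ aval c a q < 0}

theorem openAlcove_nonempty (hc : 0 < c) : (D.openAlcove c).Nonempty := by
  obtain ⟨q, hq⟩ := D.exists_inner_coroot_pos
  have hsmall : ∀ᶠ t : ℝ in nhdsWithin 0 (Set.Ioi 0), ∀ α ∈ D.R0, -c < t * ⟪q, coroot α⟫ := by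
    refine (Finset.eventually_all D.R0).mpr fun α _ => nhdsWithin_le_nhds ?_
    have htendsto : Filter.Tendsto (fun t : ℝ => t * ⟪q, coroot α⟫) (nhds 0) (nhds 0) :=
      (continuous_mul_const _).tendsto' _ _ (zero_mul _)
    exact htendsto.eventually_const_lt (neg_neg_of_pos hc)
  obtain ⟨t, ht, htpos⟩ := (hsmall.and self_mem_nhdsWithin).exists
  refine ⟨t • q, fun a ⟨ha, hlevel⟩ => ?_⟩
  rw [aval, real_inner_smul_left]
  rcases hlevel with hlevel | ⟨hlevel, hpos⟩
  · have : c ≤ a.2 * c := le_mul_of_one_le_left hc.le (by exact_mod_cast hlevel)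
    linarith [ht a.1 ha]
  · rw [hlevel, Int.cast_zero, zero_mul, add_zero]
    exact mul_pos htpos (hq a.1 hpos)

variable {D} in
theorem aval_neg_of_isAffNeg {p : V} (hp : p ∈ D.openAlcove c) {a : V × ℤ} (ha : D.IsAffNeg a) :
    aval c a p < 0 := by
  have := hp (-a) ha
  rwa [aval_neg, neg_pos] at this

theorem RW_eq_sepRoots {p : V} (hp : p ∈ D.openAlcove c) {w : Equiv.Perm V} (hw : w ∈ D.WR c) :
    D.RW c w = D.sepRoots c p (w⁻¹ p) := by
  ext a
  constructor
  · rintro ⟨ha, b, hb, hab⟩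
    exact ⟨ha.1, hp a ha, (hab p).trans_lt (aval_neg_of_isAffNeg hp hb)⟩
  · rintro ⟨ha, hpos, hneg⟩
    obtain ⟨b, hb, hab⟩ := D.exists_mapsRoot hw ha
    rw [hab] at hneg
    refine ⟨(D.isAffPos_or_isAffNeg ha).resolve_right fun h => ?_, b,
      (D.isAffPos_or_isAffNeg hb).resolve_left fun h => ?_, hab⟩
    · exact hpos.not_gt (aval_neg_of_isAffNeg hp h)
    · exact hneg.not_gt (hp b h)

theorem RW_one (hc : 0 < c) : D.RW c 1 = ∅ := by
  obtain ⟨p, hp⟩ := D.openAlcove_nonempty hc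
  rw [D.RW_eq_sepRoots hp (one_mem _), Set.eq_empty_iff_forall_notMem]
  rintro a ⟨-, hpos, hneg⟩
  exact hpos.not_gt hneg

theorem finite_sepRoots (hc : 0 < c) (p q : V) : (D.sepRoots c p q).Finite := by
  refine (D.R0.finite_toSet.biUnion fun α _ =>
    (Set.finite_Icc ⌊-⟪p, coroot α⟫ / c⌋ ⌈-⟪q, coroot α⟫ / c⌉).image (Prod.mk α)).subset ?_
  rintro ⟨α, r⟩ ⟨hα, hpos, hneg⟩
  simp only [aval] at hpos hneg
  have hlower : -⟪p, coroot α⟫ / c ≤ r := by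
    rw [div_le_iff₀ hc]
    linarith
  have hupper : (r : ℝ) ≤ -⟪q, coroot α⟫ / c := by
    rw [le_div_iff₀ hc]
    linarith
  refine Set.mem_biUnion hα ⟨r, ⟨?_, ?_⟩, rfl⟩
  · exact_mod_cast (Int.floor_le _).trans hlower
  · exact_mod_cast hupper.trans (Int.le_ceil _)

/-- The one of the roots `b` and `s_a b` that stays positive at `p`: `s_a b` if possible and `b`
otherwise. It embeds `sepRoots c p (s_a q)` into `sepRoots c p q \ {a}`. -/
def reflectIfPos (c : ℝ) (p : V) (a b : V × ℤ) : V × ℤ :=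
  if 0 < aval c (affReflect a b) p then affReflect a b else b

variable {D} {a : V × ℤ} {p q : V}

theorem reflectIfPos_mem_sepRoots (ha : a ∈ D.sepRoots c p q) {b : V × ℤ}
    (hb : b ∈ D.sepRoots c p (sAff c a q)) :
    reflectIfPos c p a b ∈ D.sepRoots c p q := by
  obtain ⟨har, hap, haq⟩ := ha
  obtain ⟨hbr, hbp, hbq⟩ := hb
  rw [reflectIfPos]
  split_ifs with h
  · exact ⟨D.isAffRoot_affReflect har hbr, h, by rwa [D.aval_affReflect c har hbr]⟩
  · rw [D.aval_affReflect c har hbr, aval_sAff] at h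
    rw [aval_sAff] at hbq
    have hpair : 0 < ⟪a.1, coroot b.1⟫ := by
      by_contra! hpair
      exact h (by linarith [mul_nonpos_of_nonneg_of_nonpos hap.le hpair])
    exact ⟨hbr, hbp, by linarith [mul_neg_of_neg_of_pos haq hpair]⟩

theorem reflectIfPos_ne (ha : a ∈ D.sepRoots c p q) {b : V × ℤ}
    (hb : b ∈ D.sepRoots c p (sAff c a q)) : reflectIfPos c p a b ≠ a := by
  obtain ⟨har, hap, haq⟩ := ha
  obtain ⟨hbr, hbp, hbq⟩ := hb
  have hane := D.ne_zero _ har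
  intro heq
  rw [reflectIfPos] at heq
  split_ifs at heq with h
  · have hb_eq : b = affReflect a a := by rw [← D.affReflect_affReflect har hbr, heq]
    rw [hb_eq, D.aval_affReflect c har har, aval_sAff_self c hane] at hbp
    linarith
  · rw [heq, aval_sAff_self c hane] at hbq
    linarith

theorem reflectIfPos_injOn (ha : D.IsAffRoot a) :
    Set.InjOn (reflectIfPos c p a) {b | D.IsAffRoot b ∧ 0 < aval c b p} := by
  rintro b ⟨hb, hbp⟩ d ⟨hd, hdp⟩ h
  rw [reflectIfPos, reflectIfPos] at h
  split_ifs at h with h₁ h₂ h₂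
  · rw [← D.affReflect_affReflect ha hb, h, D.affReflect_affReflect ha hd]
  · rw [← h, D.affReflect_affReflect ha hb] at h₂
    exact absurd hbp h₂
  · rw [h, D.affReflect_affReflect ha hd] at h₁
    exact absurd hdp h₁
  · exact h

theorem ncard_sepRoots_sAff_lt (hc : 0 < c) (ha : a ∈ D.sepRoots c p q) :
    (D.sepRoots c p (sAff c a q)).ncard < (D.sepRoots c p q).ncard := by
  have hfin := D.finite_sepRoots hc p q
  calc (D.sepRoots c p (sAff c a q)).ncard
      ≤ (D.sepRoots c p q \ {a}).ncard :=
        Set.ncard_le_ncard_of_injOn (reflectIfPos c p a)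
          (fun _ hb => ⟨reflectIfPos_mem_sepRoots ha hb, reflectIfPos_ne ha hb⟩)
          ((reflectIfPos_injOn ha.1).mono fun _ hb => And.intro hb.1 hb.2.1)
          (hfin.subset Set.sdiff_subset)
    _ < (D.sepRoots c p q).ncard := Set.ncard_sdiff_singleton_lt_of_mem ha hfin

theorem exists_mem_WR_sAff {a : V × ℤ} (ha : D.IsAffRoot a) :
    ∃ s ∈ D.WR c, ∀ x, s x = sAff c a x :=
  ⟨(sAff_involutive c (D.ne_zero _ ha)).toPerm, Subgroup.subset_closure ⟨a, ha, fun _ => rfl⟩,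
    fun _ => rfl⟩

theorem exists_len_lt_of_aval_eq_zero (hc : 0 < c) {w : Equiv.Perm V} (hw : w ∈ D.WR c)
    (ha : a ∈ D.RW c w) {y : V} (hy : aval c a y = 0) :
    ∃ w' ∈ D.WR c, w' y = w y ∧ D.len c w' < D.len c w := by
  obtain ⟨p, hp⟩ := D.openAlcove_nonempty hc
  obtain ⟨s, hsW, hs⟩ := exists_mem_WR_sAff (c := c) ha.1.1
  have hws := mul_mem hw hsW
  have hinv : (w * s)⁻¹ p = sAff c a (w⁻¹ p) := by
    rw [mul_inv_rev, Equiv.Perm.mul_apply, Equiv.Perm.inv_eq_iff_eq, hs,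
      sAff_involutive c (D.ne_zero _ ha.1.1)]
  refine ⟨w * s, hws, ?_, ?_⟩
  · rw [Equiv.Perm.mul_apply, hs, sAff_eq_self_of_aval_eq_zero hy]
  · rw [D.RW_eq_sepRoots hp hw] at ha
    rw [len, len, D.RW_eq_sepRoots hp hws, D.RW_eq_sepRoots hp hw, hinv]
    exact ncard_sepRoots_sAff_lt hc ha

end Length

section FundamentalDomain

variable {D : RootSystemData V} {c : ℝ} {wmin : V → Equiv.Perm V}

theorem aval_nonpos_of_mem_RW {w : Equiv.Perm V} {a : V × ℤ} (ha : a ∈ D.RW c w) {y : V}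
    (hy : w y ∈ D.alcove c) : aval c a y ≤ 0 := by
  obtain ⟨-, b, hb, hab⟩ := ha
  have hval : aval c a y = aval c b (w y) := by simpa using hab (w y)
  exact hval.trans_le (D.aval_nonpos_of_isAffNeg hb hy)

theorem apply_mem_alcove {w : Equiv.Perm V} (hw : w ∈ D.WR c) {y : V} (hy : y ∈ D.alcove c)
    (h : ∀ a ∈ D.RW c w, aval c a y ≤ 0) : w y ∈ D.alcove c := by
  intro b hb
  obtain ⟨a, ha, hba⟩ := D.exists_mapsRoot (inv_mem hw) hb.1
  have hab : ∀ x, aval c a x = aval c b (w x) := fun x => by rw [← hba x, inv_inv]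
  rw [← hab]
  rcases D.isAffPos_or_isAffNeg ha with hpos | hneg
  · exact hy a hpos
  · have hmem : -a ∈ D.RW c w := by
      refine ⟨hneg, -b, ?_, fun x => ?_⟩
      · simpa [IsAffNeg] using hb
      · simp only [aval_neg, hab, Equiv.Perm.coe_inv, Equiv.apply_symm_apply]
    have := h _ hmem
    rwa [aval_neg, neg_nonpos] at this

theorem IsWmin.eq_one_of_mem_alcove (hw : D.IsWmin c wmin) (hc : 0 < c) {y : V}
    (hy : y ∈ D.alcove c) : wmin y = 1 := by
  rcases (hw y).2.2 1 (one_mem _) hy with h | h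
  · simp [len, D.RW_one hc] at h
  · exact h.symm

theorem IsWmin.apply_eq_self_of_mem_alcove (hw : D.IsWmin c wmin) (hc : 0 < c) {y : V}
    (hy : y ∈ D.alcove c) {w : Equiv.Perm V} (hwW : w ∈ D.WR c) (hwy : w y ∈ D.alcove c) :
    w y = y := by
  induction hn : D.len c w using Nat.strong_induction_on generalizing w with
  | _ n ih =>
    rcases (D.RW c w).eq_empty_or_nonempty with hempty | ⟨a, ha⟩
    · rcases (hw y).2.2 w hwW hwy with hlt | rfl
      · simp [len, hempty] at hlt
      · rw [hw.eq_one_of_mem_alcove hc hy, Equiv.Perm.one_apply]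
    · have hzero : aval c a y = 0 := le_antisymm (aval_nonpos_of_mem_RW ha hwy) (hy a ha.1)
      obtain ⟨w', hw'W, hw'y, hlt⟩ := exists_len_lt_of_aval_eq_zero hc hwW ha hzero
      rw [← hw'y]
      exact ih _ (hn ▸ hlt) hw'W (hw'y ▸ hwy) rfl

theorem IsWmin.wmin_apply_apply (hw : D.IsWmin c wmin) (hc : 0 < c) {y : V} (hy : y ∈ D.alcove c)
    {w : Equiv.Perm V} (hwW : w ∈ D.WR c) : wmin (w y) (w y) = y :=
  hw.apply_eq_self_of_mem_alcove hc hy (mul_mem (hw (w y)).1 hwW) (hw (w y)).2.1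

theorem IsWmin.aval_neg_of_mem_RW (hw : D.IsWmin c wmin) (hc : 0 < c) {y : V} {a : V × ℤ}
    (ha : a ∈ D.RW c (wmin y)) : aval c a y < 0 := by
  obtain ⟨hW, hA, hmin⟩ := hw y
  refine lt_of_le_of_ne (aval_nonpos_of_mem_RW ha hA) fun hzero => ?_
  obtain ⟨w', hw'W, hw'y, hlt⟩ := exists_len_lt_of_aval_eq_zero hc hW ha hzero
  rcases hmin w' hw'W (hw'y ▸ hA) with hgt | rfl
  · exact hlt.not_gt hgt
  · exact hlt.false

end FundamentalDomain

section Dichotomy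

variable {D : RootSystemData V} {cz : ℤ} {wmin : V → Equiv.Perm V} {lam ν : V}

theorem sub_mem_weightLattice {x y : V} (hx : x ∈ D.weightLattice) (hy : y ∈ D.weightLattice) :
    x - y ∈ D.weightLattice := fun α hα => by
  obtain ⟨k, hk⟩ := hx α hα
  obtain ⟨l, hl⟩ := hy α hα
  exact ⟨k - l, by rw [inner_sub_left, hk, hl, Int.cast_sub]⟩

theorem exists_intCast_eq_aval (hlam : lam ∈ D.weightLattice) {a : V × ℤ} (ha : D.IsAffRoot a) :
    ∃ m : ℤ, aval (cz : ℝ) a lam = m := by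
  obtain ⟨k, hk⟩ := hlam a.1 ha
  exact ⟨k + a.2 * cz, by rw [aval, hk]; push_cast; rfl⟩

theorem eq_and_aval_eq_one_of_sub_neg (hlam : lam ∈ D.weightLattice) (hν : ν ∈ D.smallWeights)
    {a : V × ℤ} (ha : D.IsAffRoot a) (hpos : 0 < aval (cz : ℝ) a lam)
    (hneg : aval (cz : ℝ) a (lam - ν) < 0) : a.1 = ν ∧ aval (cz : ℝ) a lam = 1 := by
  obtain ⟨m, hm⟩ := exists_intCast_eq_aval (cz := cz) hlam ha
  rw [aval_sub, hm, sub_neg] at hneg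
  rw [hm] at hpos ⊢
  have hm₁ : 1 ≤ m := by exact_mod_cast hpos
  have hroot : a.1 = ν := by
    by_contra hne
    have : (m : ℝ) < 1 := hneg.trans_le (hν.2.2 a.1 ha hne)
    exact hm₁.not_gt (by exact_mod_cast this)
  rw [← hroot, inner_coroot_self (D.ne_zero _ ha)] at hneg
  have hm₂ : m < 2 := by exact_mod_cast hneg
  exact ⟨hroot, by exact_mod_cast (by lia : m = 1)⟩

theorem IsWmin.exists_aval_eq_one (hw : D.IsWmin (cz : ℝ) wmin) (hc : 0 < cz)
    (hP : lam ∈ D.weightLattice) (hA : lam ∈ D.alcove (cz : ℝ)) (hν : ν ∈ D.smallWeights)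
    (hfix : wmin (lam - ν) lam ≠ lam) :
    ∃ r : ℤ, D.IsAffRoot (ν, r) ∧ aval (cz : ℝ) (ν, r) lam = 1 := by
  have hc' : (0 : ℝ) < cz := by exact_mod_cast hc
  obtain ⟨a, ha, hpos⟩ : ∃ a ∈ D.RW (cz : ℝ) (wmin (lam - ν)), 0 < aval (cz : ℝ) a lam := by
    by_contra! hnonpos
    have hW := (hw (lam - ν)).1
    exact hfix (hw.apply_eq_self_of_mem_alcove hc' hA hW (apply_mem_alcove hW hA hnonpos))
  obtain ⟨rfl, hone⟩ :=
    eq_and_aval_eq_one_of_sub_neg hP hν ha.1.1 hpos (hw.aval_neg_of_mem_RW hc' ha)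
  exact ⟨a.2, ha.1.1, hone⟩

theorem IsWmin.wmin_apply_sub_eq_iff (hw : D.IsWmin (cz : ℝ) wmin) (hc : 0 < cz)
    (hP : lam ∈ D.weightLattice) (hA : lam ∈ D.alcove (cz : ℝ)) (hν : ν ∈ D.smallWeights) :
    wmin (lam - ν) (lam - ν) = lam ↔ wmin (lam - ν) lam ≠ lam := by
  constructor
  · intro hsub hlam
    have : lam - ν = lam := (wmin (lam - ν)).injective (hsub.trans hlam.symm)
    exact hν.2.1 (sub_eq_self.mp this)
  · intro hfix
    obtain ⟨r, hroot, hone⟩ := hw.exists_aval_eq_one hc hP hA hν hfix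
    obtain ⟨s, hsW, hs⟩ := exists_mem_WR_sAff (c := (cz : ℝ)) hroot
    have hslam : s lam = lam - ν := by rw [hs, sAff, hone, one_smul]
    rw [← hslam]
    exact hw.wmin_apply_apply (by exact_mod_cast hc) hA hsW

end Dichotomy

section Laplacian

variable {D : RootSystemData V} {K : Type*} [Field K] {wmin : V → Equiv.Perm V} {lam ν : V}

theorem IsWmin.acoef_eq_sq {c : ℝ} (hw : D.IsWmin c wmin) (hc : 0 < c) (τ : V × ℤ → K)
    (hA : lam ∈ D.alcove c) (ν : V) :
    D.acoef c τ wmin lam ν = D.tauw c τ (wmin (lam - ν)) ^ 2 := by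
  have hτ₁ : D.tauw c τ 1 = 1 := by rw [tauw, D.RW_one hc, finprod_mem_empty]
  simp only [acoef, hw.eq_one_of_mem_alcove hc hA, Equiv.Perm.one_apply, mul_one, hτ₁, inv_one, sq]

variable {cz : ℤ}

theorem IsWmin.bcoef_eq_ite (hw : D.IsWmin (cz : ℝ) wmin) (hc : 0 < cz) (τ : V × ℤ → K)
    (hP : lam ∈ D.weightLattice) (hA : lam ∈ D.alcove (cz : ℝ)) (hν : ν ∈ D.smallWeights) :
    D.bcoef (cz : ℝ) τ wmin lam ν =
      if wmin (lam - ν) lam = lam then D.ccoef (cz : ℝ) τ wmin lam ν else 0 := by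
  have hc' : (0 : ℝ) < cz := by exact_mod_cast hc
  have hiff := hw.wmin_apply_sub_eq_iff hc hP hA hν
  rw [bcoef, hw.eq_one_of_mem_alcove hc' hA]
  simp only [Equiv.Perm.one_apply, linPart, sub_zero]
  by_cases hfix : wmin (lam - ν) lam = lam
  · rw [if_neg fun hsub => hiff.mp hsub hfix, if_pos hfix]
  · obtain ⟨r, -, hone⟩ := hw.exists_aval_eq_one hc hP hA hν hfix
    have hfloor : ⌊(1 - ⟪lam, coroot ν⟫) / (cz : ℝ)⌋ = r := by
      rw [← hone, aval, add_sub_cancel_left, mul_div_cancel_right₀ _ hc'.ne', Int.floor_intCast]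
    -- `χ` is evaluated at a root taking the value `1` at `λ`, which is therefore not negative.
    have hnotneg : ¬ D.IsAffNeg (ν, r) := fun hneg => by
      linarith [D.aval_nonpos_of_isAffNeg hneg hA]
    rw [if_pos (hiff.mpr hfix), if_neg hfix, hfloor, if_neg hnotneg, mul_zero]

/-- The three terms are the contributions to the two sums in `U` and to the coefficients `V`. -/
theorem IsWmin.laplacian_summand_eq (hw : D.IsWmin (cz : ℝ) wmin) (hc : 0 < cz) (τ : V × ℤ → K)
    (hP : lam ∈ D.weightLattice) (hA : lam ∈ D.alcove (cz : ℝ)) (hν : ν ∈ D.smallWeights)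
    {f : V → K} (hf : ∀ w ∈ D.WR (cz : ℝ), ∀ x, f (w x) = f x) (t : K) :
    D.acoef (cz : ℝ) τ wmin lam ν * f (lam - ν) + D.bcoef (cz : ℝ) τ wmin lam ν * t * f lam =
      (if wmin (lam - ν) (lam - ν) = lam then
          D.tauw (cz : ℝ) τ (wmin (lam - ν)) ^ 2 * f lam else 0) +
        (if wmin (lam - ν) lam = lam then t * D.ccoef (cz : ℝ) τ wmin lam ν * f lam else 0) +
        (if wmin (lam - ν) lam = lam then
          D.tauw (cz : ℝ) τ (wmin (lam - ν)) ^ 2 * f (lam - ν) else 0) := by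
  have hiff := hw.wmin_apply_sub_eq_iff hc hP hA hν
  rw [hw.acoef_eq_sq (by exact_mod_cast hc) τ hA, hw.bcoef_eq_ite hc τ hP hA hν]
  by_cases hfix : wmin (lam - ν) lam = lam
  · rw [if_pos hfix, if_neg fun h => hiff.mp h hfix, if_pos hfix, if_pos hfix]
    ring
  · have hsub := hiff.mpr hfix
    have hflam : f (lam - ν) = f lam := by rw [← hf _ (hw (lam - ν)).1 (lam - ν), hsub]
    rw [if_neg hfix, if_pos hsub, if_neg hfix, if_neg hfix, hflam]
    ring

theorem IsWmin.exists_stabilizer_apply_sub_eq_iff (hw : D.IsWmin (cz : ℝ) wmin) (hc : 0 < cz)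
    (hP : lam ∈ D.weightLattice) (hA : lam ∈ D.alcove (cz : ℝ)) (hν : ν ∈ D.smallWeights)
    (hνA : lam - ν ∈ D.alcove (cz : ℝ)) {μ : V} :
    (∃ w ∈ D.WR (cz : ℝ), w lam = lam ∧ w (lam - ν) = μ) ↔
      wmin μ lam = lam ∧ wmin μ μ = lam - ν := by
  constructor
  · rintro ⟨w, hwW, hwlam, rfl⟩
    have hplus := hw.wmin_apply_apply (by exact_mod_cast hc) hνA hwW
    refine ⟨?_, hplus⟩
    obtain ⟨u, hu, hwu⟩ := D.exists_mem_W0_sub_eq hwW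
    have hsub : w (lam - ν) = lam - u ν := by
      have := hwu lam (lam - ν)
      rw [hwlam, sub_sub_cancel] at this
      rw [← this, sub_sub_cancel]
    have hiff := hw.wmin_apply_sub_eq_iff hc hP hA (apply_mem_smallWeights hu hν)
    rw [← hsub, hplus, sub_eq_self] at hiff
    exact not_not.mp (hiff.not.mp hν.2.1)
  · rintro ⟨hlam, hμ⟩
    refine ⟨(wmin μ)⁻¹, inv_mem (hw μ).1, ?_, ?_⟩
    · rw [Equiv.Perm.inv_eq_iff_eq, hlam]
    · rw [Equiv.Perm.inv_eq_iff_eq, hμ]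

variable {S : Finset V}

theorem sub_apply_sub_mem {c : ℝ} (hSW : ∀ u ∈ D.W0, ∀ ν ∈ S, u ν ∈ S) {w : Equiv.Perm V}
    (hw : w ∈ D.WR c) (hwlam : w lam = lam) (hν : ν ∈ S) : lam - w (lam - ν) ∈ S := by
  obtain ⟨u, hu, hwu⟩ := D.exists_mem_W0_sub_eq hw
  have := hwu lam (lam - ν)
  rw [hwlam, sub_sub_cancel] at this
  exact this ▸ hSW u hu ν hν

theorem IsWmin.sum_filter_fixed_eq (hw : D.IsWmin (cz : ℝ) wmin) (hc : 0 < cz)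
    (hP : lam ∈ D.weightLattice) (hA : lam ∈ D.alcove (cz : ℝ)) (hS : ↑S ⊆ D.smallWeights)
    (hSW : ∀ u ∈ D.W0, ∀ ν ∈ S, u ν ∈ S) {Orb : V → Finset V}
    (hOrb : ∀ ν μ, μ ∈ Orb ν ↔ ∃ w ∈ D.WR (cz : ℝ), w lam = lam ∧ w (lam - ν) = μ) (g : V → K) :
    ∑ ν ∈ S with wmin (lam - ν) lam = lam, g (lam - ν) =
      ∑ ν ∈ S with lam - ν ∈ D.weightLattice ∩ D.alcove (cz : ℝ), ∑ μ ∈ Orb ν, g μ := by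
  have hmaps : ∀ ν ∈ S.filter fun ν => wmin (lam - ν) lam = lam,
      lam - wmin (lam - ν) (lam - ν) ∈
        S.filter fun ν => lam - ν ∈ D.weightLattice ∩ D.alcove (cz : ℝ) := by
    intro ν hν
    obtain ⟨hνS, hfix⟩ := Finset.mem_filter.mp hν
    have hmem := sub_apply_sub_mem hSW (hw _).1 hfix hνS
    refine Finset.mem_filter.mpr ⟨hmem, sub_mem_weightLattice hP (hS hmem).1, ?_⟩
    rw [sub_sub_cancel]
    exact (hw _).2.1
  rw [← Finset.sum_fiberwise_of_maps_to hmaps]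
  refine Finset.sum_congr rfl fun ν₀ hν₀ => ?_
  obtain ⟨hν₀S, -, hν₀A⟩ := Finset.mem_filter.mp hν₀
  have hmem : ∀ {μ}, μ ∈ Orb ν₀ ↔ wmin μ lam = lam ∧ wmin μ μ = lam - ν₀ :=
    (hOrb ν₀ _).trans (hw.exists_stabilizer_apply_sub_eq_iff hc hP hA (hS hν₀S) hν₀A)
  refine Finset.sum_nbij' (lam - ·) (lam - ·) (fun ν hν => ?_) (fun μ hμ => ?_)
    (fun _ _ => sub_sub_cancel _ _) (fun _ _ => sub_sub_cancel _ _) (fun _ _ => rfl)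
  · obtain ⟨hν, hfiber⟩ := Finset.mem_filter.mp hν
    exact hmem.mpr ⟨(Finset.mem_filter.mp hν).2, by rw [← hfiber, sub_sub_cancel]⟩
  · obtain ⟨w, hwW, hwlam, rfl⟩ := (hOrb ν₀ μ).mp hμ
    obtain ⟨hfix, hplus⟩ := hmem.mp hμ
    simp only [Finset.mem_filter, sub_sub_cancel]
    exact ⟨⟨sub_apply_sub_mem hSW hwW hwlam hν₀S, hfix⟩, by rw [hplus, sub_sub_cancel]⟩

end Laplacian

end RootSystemData

open RootSystemData in
theorem statement8_general {V : Type*} [NormedAddCommGroup V] [InnerProductSpace ℝ V]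
    {K : Type*} [Field K] (D : RootSystemData V) {cz : ℤ} (hc : 0 < cz) (τ : V × ℤ → K)
    {wmin : V → Equiv.Perm V} (hwmin : D.IsWmin (cz : ℝ) wmin)
    {S : Finset V} (hS : ↑S ⊆ D.smallWeights) (hSW : ∀ u ∈ D.W0, ∀ ν ∈ S, u ν ∈ S)
    {f : V → K} (hf : ∀ w ∈ D.WR (cz : ℝ), ∀ x, f (w x) = f x)
    {lam : V} (hlam : lam ∈ D.weightLattice ∩ D.alcove (cz : ℝ)) {Orb : V → Finset V}
    (hOrb : ∀ ν μ, μ ∈ Orb ν ↔ ∃ w ∈ D.WR (cz : ℝ), w lam = lam ∧ w (lam - ν) = μ) :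
    ∑ ν ∈ S, (D.acoef (cz : ℝ) τ wmin lam ν * f (lam - ν)
          + D.bcoef (cz : ℝ) τ wmin lam ν * (1 - (D.tauZero τ)⁻¹ ^ 2) * f lam)
      = ((∑ ν ∈ S with wmin (lam - ν) (lam - ν) = lam, D.tauw (cz : ℝ) τ (wmin (lam - ν)) ^ 2)
          + (1 - (D.tauZero τ)⁻¹ ^ 2) *
            ∑ ν ∈ S with wmin (lam - ν) lam = lam, D.ccoef (cz : ℝ) τ wmin lam ν) * f lam
        + ∑ ν ∈ S with lam - ν ∈ D.weightLattice ∩ D.alcove (cz : ℝ),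
            (∑ μ ∈ Orb ν, D.tauw (cz : ℝ) τ (wmin μ) ^ 2) * f (lam - ν) := by
  obtain ⟨hP, hA⟩ := hlam
  have hforbit : ∀ ν, ∀ μ ∈ Orb ν, f μ = f (lam - ν) := fun ν μ hμ => by
    obtain ⟨w, hwW, -, rfl⟩ := (hOrb ν μ).mp hμ
    exact hf w hwW _
  have horbits := hwmin.sum_filter_fixed_eq hc hP hA hS hSW hOrb
    fun μ => D.tauw (cz : ℝ) τ (wmin μ) ^ 2 * f μ
  rw [Finset.sum_congr rfl fun ν hν => hwmin.laplacian_summand_eq hc τ hP hA (hS hν) hf _,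
    Finset.sum_add_distrib, Finset.sum_add_distrib, ← Finset.sum_filter, ← Finset.sum_filter,
    ← Finset.sum_filter, horbits, add_mul, Finset.mul_sum, Finset.sum_mul, Finset.sum_mul]
  congr 1
  refine Finset.sum_congr rfl fun ν _ => ?_
  rw [Finset.sum_mul]
  exact Finset.sum_congr rfl fun μ hμ => by rw [hforbit ν μ hμ]

open RootSystemData in
/-- the restriction of the discrete Laplacian `L_ω` (for `ω` minuscule or
quasi-minuscule) to `W_R`-invariant functions, evaluated at `λ ∈ P_c⁺`, takes the form
`U_{λ,ω} f(λ) + ∑_{ν ∈ W₀ω, λ-ν ∈ P_c⁺} V_{λ,ν} f(λ-ν)` with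
`V_{λ,ν} = ∑_{μ ∈ W_{R,λ}(λ-ν)} τ_{w_μ}²` and
`U_{λ,ω} = ∑_{(λ-ν)₊=λ} τ_{w_{λ-ν}}² + (1-τ₀⁻²) ∑_{w_{λ-ν}λ=λ} c_{λ,ν}`. -/
theorem statement8 {V : Type*} [NormedAddCommGroup V] [InnerProductSpace ℝ V]
    (D : RootSystemData V) (cz : ℤ) (hc : 1 < cz)
    (τ : V × ℤ → ℂ) (hτ : D.IsMultiplicity (cz : ℝ) τ)
    (wmin : V → Equiv.Perm V) (hwmin : D.IsWmin (cz : ℝ) wmin)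
    (ω : V) (hω : D.IsMinuscule ω ∨ D.IsQuasiMinuscule ω)
    (orb : Finset V) (horb : ∀ ν : V, ν ∈ orb ↔ ∃ w ∈ D.W0, w ω = ν)
    (f : V → ℂ) (hf : ∀ w ∈ D.WR (cz : ℝ), ∀ lam : V, f (w lam) = f lam)
    (lam : V) (hlam : lam ∈ D.weightLattice ∩ D.alcove (cz : ℝ))
    (Orb : V → Finset V)
    (hOrb : ∀ ν μ : V, μ ∈ Orb ν ↔ ∃ w ∈ D.WR (cz : ℝ), w lam = lam ∧ w (lam - ν) = μ) :
    ∑ ν ∈ orb,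
        (D.acoef (cz : ℝ) τ wmin lam ν * f (lam - ν)
          + D.bcoef (cz : ℝ) τ wmin lam ν * (1 - (D.tauZero τ)⁻¹ ^ 2) * f lam)
      = ((∑ ν ∈ orb.filter fun ν => (wmin (lam - ν)) (lam - ν) = lam,
            D.tauw (cz : ℝ) τ (wmin (lam - ν)) ^ 2)
          + (1 - (D.tauZero τ)⁻¹ ^ 2) *
            ∑ ν ∈ orb.filter fun ν => (wmin (lam - ν)) lam = lam,
              D.ccoef (cz : ℝ) τ wmin lam ν) * f lam
        + ∑ ν ∈ orb.filter fun ν => lam - ν ∈ D.weightLattice ∩ D.alcove (cz : ℝ),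
            (∑ μ ∈ Orb ν, D.tauw (cz : ℝ) τ (wmin μ) ^ 2) * f (lam - ν) := by
  have hω' := mem_smallWeights_of_isMinuscule_or_isQuasiMinuscule hω
  exact statement8_general D (by lia) τ hwmin (orbit_subset_smallWeights hω' horb)
    (fun _ hu _ => apply_mem_orbit horb hu) hf hlam hOrb
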